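/- arXiv:2005.08584 — 5 statements merged into one kernel-verified Lean document; each statement's English description precedes it below -/
import Mathlib

section
/- Fix a finite bipartite graph with men M, women W and edge set E ⊆ M × W, and consider incomplete preference profiles where each agent has a strict total order on their neighborhood. For every partial matching μ ⊆ E, the number of incomplete preference profiles under which μ is stable and women-optimal equals the number of incomplete preference profiles under which μ is stable and men-optimal. (Equivalently, when each agent ranks their neighbors uniformly and independently at random, the output distributions of the women-proposing and men-proposing deferred acceptance procedures are identical.) -/
section

variable {Mn Wn : Type*} [Fintype Mn] [Fintype Wn] [DecidableEq Mn] [DecidableEq Wn]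

/-- An incomplete preference profile on the bipartite graph with edge set `E`: each man `m`
has a strict total order on his neighborhood (encoded as a ranking bijection with
`Fin (#neighbours)`, smaller rank = more preferred), and symmetrically for each woman. -/
def IncProfile (E : Finset (Mn × Wn)) : Type _ :=
  (∀ m : Mn, {w : Wn // (m, w) ∈ E} ≃ Fin (Fintype.card {w : Wn // (m, w) ∈ E})) ×
  (∀ w : Wn, {m : Mn // (m, w) ∈ E} ≃ Fin (Fintype.card {m : Mn // (m, w) ∈ E}))

/-- `w₁ ≻ₘ w₂` for the incomplete profile `p` (both must be neighbours of `m`). -/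
def PrefM {E : Finset (Mn × Wn)} (p : IncProfile E) (m : Mn) (w₁ w₂ : Wn) : Prop :=
  ∃ (h₁ : (m, w₁) ∈ E) (h₂ : (m, w₂) ∈ E), p.1 m ⟨w₁, h₁⟩ < p.1 m ⟨w₂, h₂⟩

/-- `m₁ ≻_w m₂` for the incomplete profile `p`. -/
def PrefW {E : Finset (Mn × Wn)} (p : IncProfile E) (w : Wn) (m₁ m₂ : Mn) : Prop :=
  ∃ (h₁ : (m₁, w) ∈ E) (h₂ : (m₂, w) ∈ E), p.2 w ⟨m₁, h₁⟩ < p.2 w ⟨m₂, h₂⟩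

/-- `ν` is a partial matching: a set of edges of `E`, no two of which share an endpoint. -/
def IsPartialMatching (E ν : Finset (Mn × Wn)) : Prop :=
  ν ⊆ E ∧ ∀ e₁ ∈ ν, ∀ e₂ ∈ ν, (e₁.1 = e₂.1 ∨ e₁.2 = e₂.2) → e₁ = e₂

/-- The pair `(m, w) ∈ E` blocks `ν`: `m` is unmatched or prefers `w` to his partner, and
`w` is unmatched or prefers `m` to her partner. -/
def Blocks (E : Finset (Mn × Wn)) {E' : Finset (Mn × Wn)} (p : IncProfile E')
    (ν : Finset (Mn × Wn)) (m : Mn) (w : Wn) : Prop :=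
  (m, w) ∈ E ∧ (∀ w', (m, w') ∈ ν → PrefM p m w w') ∧ (∀ m', (m', w) ∈ ν → PrefW p w m m')

/-- `ν` is a stable partial matching for the incomplete profile `p`. -/
def IsStable (E : Finset (Mn × Wn)) (p : IncProfile E) (ν : Finset (Mn × Wn)) : Prop :=
  IsPartialMatching E ν ∧ ¬ ∃ m w, Blocks E p ν m w

/-- `ν` is stable and women-optimal: for every stable partial matching `ν'` and every woman
matched in `ν'`, she is matched in `ν` and weakly prefers her `ν`-partner. -/
def IsWomenOptimal (E : Finset (Mn × Wn)) (p : IncProfile E) (ν : Finset (Mn × Wn)) : Prop :=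
  IsStable E p ν ∧ ∀ ν', IsStable E p ν' →
    ∀ m' w, (m', w) ∈ ν' → ∃ m, (m, w) ∈ ν ∧ (m = m' ∨ PrefW p w m m')

/-- `ν` is stable and men-optimal. -/
def IsMenOptimal (E : Finset (Mn × Wn)) (p : IncProfile E) (ν : Finset (Mn × Wn)) : Prop :=
  IsStable E p ν ∧ ∀ ν', IsStable E p ν' →
    ∀ m w', (m, w') ∈ ν' → ∃ w, (m, w) ∈ ν ∧ (w = w' ∨ PrefM p m w w')

namespace DAsym

variable {A B I : Type*}

def gpref {B : Type*} {N : B → Prop} {n : ℕ} (r : {b // N b} ≃ Fin n) (b₁ b₂ : B) : Prop :=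
  ∃ (h₁ : N b₁) (h₂ : N b₂), r ⟨b₁, h₁⟩ < r ⟨b₂, h₂⟩

theorem gpref_irrefl {N : B → Prop} {n : ℕ} (r : {b // N b} ≃ Fin n) (b : B) : ¬ gpref r b b := by
  rintro ⟨h, h', hl⟩
  exact lt_irrefl _ hl

theorem gpref_trans {N : B → Prop} {n : ℕ} {r : {b // N b} ≃ Fin n} {a b c : B}
    (h₁ : gpref r a b) (h₂ : gpref r b c) : gpref r a c := by
  obtain ⟨x, y, h⟩ := h₁
  obtain ⟨x', y', h'⟩ := h₂
  exact ⟨x, y', h.trans h'⟩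

theorem gpref_total {N : B → Prop} {n : ℕ} (r : {b // N b} ≃ Fin n) {a b : B}
    (ha : N a) (hb : N b) (hne : a ≠ b) : gpref r a b ∨ gpref r b a := by
  rcases lt_trichotomy (r ⟨a, ha⟩) (r ⟨b, hb⟩) with h | h | h
  · exact Or.inl ⟨ha, hb, h⟩
  · exact absurd (congrArg Subtype.val (r.injective h)) hne
  · exact Or.inr ⟨hb, ha, h⟩

abbrev GProf (E : A → B → Prop) (n : A → ℕ) (k : B → ℕ) :=
  (∀ a, {b // E a b} ≃ Fin (n a)) × (∀ b, {a // E a b} ≃ Fin (k b))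

variable {E : A → B → Prop} {n : A → ℕ} {k : B → ℕ}

def GBlocks (p : GProf E n k) (ν : A → B → Prop) (a : A) (b : B) : Prop :=
  E a b ∧ (∀ b', ν a b' → gpref (p.1 a) b b') ∧ (∀ a', ν a' b → gpref (p.2 b) a a')

structure GStable (p : GProf E n k) (ν : A → B → Prop) : Prop where
  sub : ∀ a b, ν a b → E a b
  fnA : ∀ a b b', ν a b → ν a b' → b = b'
  fnB : ∀ a a' b, ν a b → ν a' b → a = a'
  nb : ∀ a b, ¬ GBlocks p ν a b

def GWOpt (p : GProf E n k) (ν : A → B → Prop) : Prop :=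
  GStable p ν ∧ ∀ ν', GStable p ν' →
    ∀ a' b, ν' a' b → ∃ a, ν a b ∧ (a = a' ∨ gpref (p.2 b) a a')

def Cand (p : GProf E n k) (ν : A → B → Prop) (a : A) (b : B) : Prop :=
  E a b ∧ ∀ a', ν a' b → gpref (p.2 b) a a'

def mat (x : I → A) (y : I → B) (a : A) (b : B) : Prop := ∃ i, x i = a ∧ y i = b

def Step (p : GProf E n k) (x : I → A) (y : I → B) (i j : I) : Prop :=
  Cand p (mat x y) (x i) (y j) ∧
    ∀ b, Cand p (mat x y) (x i) b → b = y j ∨ gpref (p.1 (x i)) (y j) b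

def Trap (p : GProf E n k) (x : I → A) (y : I → B) (S : Finset I) : Prop :=
  S.Nonempty ∧ ∀ i ∈ S, ∃ j ∈ S, Step p x y i j

theorem step_unique {p : GProf E n k} {x : I → A} {y : I → B} (hy : Function.Injective y)
    {i j j' : I} (h : Step p x y i j) (h' : Step p x y i j') : j = j' := by
  rcases h.2 _ h'.1 with e | e
  · exact (hy e).symm
  · rcases h'.2 _ h.1 with e' | e'
    · exact hy e'
    · exact absurd (gpref_trans e e') (gpref_irrefl _ _)

theorem not_step_self {p : GProf E n k} {x : I → A} {y : I → B} (i : I) :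
    ¬ Step p x y i i := fun h => gpref_irrefl _ _ (h.1.2 (x i) ⟨i, rfl, rfl⟩)

/-- A trap yields a stable matching better for some `b`. -/
theorem not_opt_of_trap {p : GProf E n k} {x : I → A} {y : I → B}
    (hx : Function.Injective x) (hy : Function.Injective y)
    (hs : GStable p (mat x y)) {S₀ : Finset I} (hS₀ : Trap p x y S₀) :
    ¬ GWOpt p (mat x y) := by
  classical
  obtain ⟨S, hS, hmin⟩ : ∃ S, Trap p x y S ∧ ∀ T, Trap p x y T → S.card ≤ T.card := by
    obtain ⟨S, hS, hm⟩ := WellFounded.has_min (measure (fun S : Finset I => S.card)).wf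
      {S | Trap p x y S} ⟨S₀, hS₀⟩
    exact ⟨S, hS, fun T hT => not_lt.1 (hm T hT)⟩
  have hf : ∀ i, ∃ j, i ∈ S → j ∈ S ∧ Step p x y i j := by
    intro i
    by_cases h : i ∈ S
    · obtain ⟨j, hj⟩ := hS.2 i h
      exact ⟨j, fun _ => hj⟩
    · exact ⟨i, fun h' => absurd h' h⟩
  choose f hf using hf
  have hsub : S.image f ⊆ S := by
    intro j hj
    obtain ⟨i, hi, rfl⟩ := Finset.mem_image.1 hj
    exact (hf i hi).1
  have htr : Trap p x y (S.image f) := by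
    refine ⟨hS.1.image f, fun j hj => ⟨f j, Finset.mem_image_of_mem f (hsub hj), (hf j (hsub hj)).2⟩⟩
  have hcard := hmin _ htr
  have himg : S.image f = S := Finset.eq_of_subset_of_card_le hsub hcard
  have hinj : Set.InjOn f S := Finset.card_image_iff.1 (by rw [himg])
  have hsurj : ∀ j ∈ S, ∃ i ∈ S, f i = j := fun j hj => by
    rw [← himg] at hj; simpa using hj
  let ν : A → B → Prop := fun a b =>
    ∃ i, x i = a ∧ ((i ∉ S ∧ y i = b) ∨ (i ∈ S ∧ y (f i) = b))
  have hνs : GStable p ν := by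
    refine ⟨?_, ?_, ?_, ?_⟩
    · rintro a b ⟨i, rfl, ⟨h, rfl⟩ | ⟨h, rfl⟩⟩
      · exact hs.sub _ _ ⟨i, rfl, rfl⟩
      · exact (hf i h).2.1.1
    · rintro a b b' ⟨i, rfl, h⟩ ⟨i', e, h'⟩
      cases hx e
      rcases h with ⟨h, rfl⟩ | ⟨h, rfl⟩ <;> rcases h' with ⟨h', rfl⟩ | ⟨h', rfl⟩ <;> first | rfl | contradiction
    · rintro a a' b ⟨i, rfl, h⟩ ⟨i', rfl, h'⟩
      rcases h with ⟨h, rfl⟩ | ⟨h, rfl⟩ <;> rcases h' with ⟨h', e⟩ | ⟨h', e⟩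
      · rw [hy e]
      · exact absurd (hy e ▸ (hf i' h').1) h
      · exact absurd (hy e ▸ (hf i h).1) h'
      · rw [hinj h' h (hy e)]
    · rintro a b ⟨hE, hA, hB⟩
      have hc : Cand p (mat x y) a b := by
        refine ⟨hE, ?_⟩
        rintro a' ⟨j, rfl, rfl⟩
        by_cases hj : j ∈ S
        · obtain ⟨i, hi, rfl⟩ := hsurj j hj
          exact gpref_trans (hB (x i) ⟨i, rfl, Or.inr ⟨hi, rfl⟩⟩)
            ((hf i hi).2.1.2 _ ⟨f i, rfl, rfl⟩)
        · exact hB _ ⟨j, rfl, Or.inl ⟨hj, rfl⟩⟩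
      by_cases ha : ∃ i ∈ S, x i = a
      · obtain ⟨i, hi, rfl⟩ := ha
        have h1 := hA (y (f i)) ⟨i, rfl, Or.inr ⟨hi, rfl⟩⟩
        rcases (hf i hi).2.2 b hc with e | e
        · subst e; exact gpref_irrefl _ _ h1
        · exact gpref_irrefl _ _ (gpref_trans e h1)
      · refine hs.nb a b ⟨hE, ?_, hc.2⟩
        rintro b' ⟨i, rfl, rfl⟩
        exact hA _ ⟨i, rfl, Or.inl ⟨fun h => ha ⟨i, h, rfl⟩, rfl⟩⟩
  intro hopt
  obtain ⟨i, hi⟩ := hS.1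
  obtain ⟨a, hm, h⟩ := hopt.2 ν hνs (x i) (y (f i)) ⟨i, rfl, Or.inr ⟨hi, rfl⟩⟩
  have h2 := (hf i hi).2.1.2 a hm
  rcases h with rfl | h
  · exact gpref_irrefl _ _ h2
  · exact gpref_irrefl _ _ (gpref_trans h2 h)

theorem exists_trap [Fintype I] {p : GProf E n k} {x : I → A} {y : I → B}
    (hx : Function.Injective x) (hy : Function.Injective y)
    (hs : GStable p (mat x y)) (hno : ¬ GWOpt p (mat x y)) :
    ∃ S, Trap p x y S := by
  classical
  have : ∃ ν, GStable p ν ∧ ∃ a b, ν a b ∧ Cand p (mat x y) a b := by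
    by_contra hcon
    apply hno
    refine ⟨hs, fun ν hν a' b hab => ?_⟩
    by_contra hc
    refine hcon ⟨ν, hν, a', b, hab, hν.sub _ _ hab, fun a ha => ?_⟩
    by_contra hc'
    refine hc ⟨a, ha, ?_⟩
    by_cases e : a = a'
    · exact Or.inl e
    · exact Or.inr ((gpref_total (N := fun c => E c b) _ (hs.sub _ _ ha) (hν.sub _ _ hab) e).resolve_right hc')
  obtain ⟨ν, hν, a₀, b₀, h₀, hc₀⟩ := this
  -- D : indices whose A-side is matched by ν to someone who is better off
  let D : Finset I := Finset.univ.filter (fun i => ∃ b, ν (x i) b ∧ Cand p (mat x y) (x i) b)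
  have memD : ∀ i, i ∈ D ↔ ∃ b, ν (x i) b ∧ Cand p (mat x y) (x i) b := by simp [D]
  -- any such a is matched
  have hmat : ∀ a b, ν a b → Cand p (mat x y) a b →
      ∃ i ∈ D, x i = a ∧ gpref (p.1 a) (y i) b := by
    intro a b hab hc
    have := hs.nb a b
    by_contra hcon
    apply this
    refine ⟨hc.1, ?_, hc.2⟩
    rintro b' ⟨i, rfl, rfl⟩
    by_contra hp
    have hne : y i ≠ b := by
      rintro rfl
      exact gpref_irrefl _ _ (hc.2 _ ⟨i, rfl, rfl⟩)
    exact hcon ⟨i, (memD i).2 ⟨b, hab, hc⟩, rfl,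
      (gpref_total _ (hs.sub _ _ ⟨i, rfl, rfl⟩) hc.1 hne).resolve_right hp⟩
  -- for i in D, y i is better off in ν
  have hW : ∀ i, ∃ j, i ∈ D → j ∈ D ∧ ν (x j) (y i) ∧ Cand p (mat x y) (x j) (y i) := by
    intro i
    by_cases hi : i ∈ D
    swap
    · exact ⟨i, fun h => absurd h hi⟩
    obtain ⟨b, hb, hc⟩ := (memD i).1 hi
    obtain ⟨i', _, e, hp⟩ := hmat _ _ hb hc
    cases hx e
    have hnb := hν.nb (x i) (y i)
    have : ∃ a, ν a (y i) ∧ ¬ gpref (p.2 (y i)) (x i) a := by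
      by_contra hcon
      push Not at hcon
      refine hnb ⟨hs.sub _ _ ⟨i, rfl, rfl⟩, ?_, hcon⟩
      intro b' hb'
      rw [hν.fnA _ _ _ hb' hb]
      exact hp
    obtain ⟨a, ha, hna⟩ := this
    have hne : x i ≠ a := by
      rintro rfl
      rw [hν.fnA _ _ _ ha hb] at hp
      exact gpref_irrefl _ _ hp
    have hpa := (gpref_total (N := fun c => E c (y i)) (p.2 (y i))
      (hs.sub _ _ ⟨i, rfl, rfl⟩) (hν.sub _ _ ha) hne).resolve_left hna
    have hca : Cand p (mat x y) a (y i) := by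
      refine ⟨hν.sub _ _ ha, ?_⟩
      rintro a' ⟨j, rfl, e⟩
      cases hy e
      exact hpa
    obtain ⟨j, hj, rfl, _⟩ := hmat _ _ ha hca
    exact ⟨j, fun _ => ⟨hj, ha, hca⟩⟩
  choose g hg using hW
  have ginj : Set.InjOn g D := by
    intro i hi i' hi' e
    have h1 := (hg i hi).2.1
    rw [e] at h1
    exact hy (hν.fnA _ _ _ h1 (hg i' hi').2.1)
  have himg : D.image g = D := by
    apply Finset.eq_of_subset_of_card_le
    · intro j hj
      obtain ⟨i, hi, rfl⟩ := Finset.mem_image.1 hj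
      exact (hg i hi).1
    · rw [Finset.card_image_of_injOn ginj]
  -- every improving b is y of D
  have hWD : ∀ a b, ν a b → Cand p (mat x y) a b → ∃ j ∈ D, y j = b := by
    intro a b hab hc
    obtain ⟨i, hi, rfl, _⟩ := hmat _ _ hab hc
    rw [← himg] at hi
    obtain ⟨j, hj, rfl⟩ := Finset.mem_image.1 hi
    exact ⟨j, hj, hν.fnA _ _ _ (hg j hj).2.1 hab⟩
  obtain ⟨i₀, hi₀, _⟩ := hmat _ _ h₀ hc₀
  refine ⟨D, ⟨i₀, hi₀⟩, fun i hi => ?_⟩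
  obtain ⟨b, hb, hc⟩ := (memD i).1 hi
  -- best candidate
  obtain ⟨b₁, hc₁, hbest⟩ : ∃ b₁, Cand p (mat x y) (x i) b₁ ∧
      ∀ b, Cand p (mat x y) (x i) b → b = b₁ ∨ gpref (p.1 (x i)) b₁ b := by
    obtain ⟨r, ⟨hr, hm⟩⟩ := WellFounded.has_min
      (measure (fun b : {b // E (x i) b} => (p.1 (x i) b : ℕ))).wf
      {b | Cand p (mat x y) (x i) b.1} ⟨⟨b, hc.1⟩, hc⟩
    refine ⟨r.1, hr, fun b hb => ?_⟩
    by_cases e : b = r.1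
    · exact Or.inl e
    · refine Or.inr ((gpref_total _ hb.1 hr.1 e).resolve_left ?_)
      rintro ⟨h1, h2, h3⟩
      exact hm ⟨b, h1⟩ hb h3
  have : ∃ a, ν a b₁ ∧ Cand p (mat x y) a b₁ := by
    rcases hbest b hc with rfl | hlt
    · exact ⟨_, hb, hc⟩
    · have hnb := hν.nb (x i) b₁
      have : ∃ a, ν a b₁ ∧ ¬ gpref (p.2 b₁) (x i) a := by
        by_contra hcon
        push Not at hcon
        refine hnb ⟨hc₁.1, ?_, hcon⟩
        intro b' hb'
        rw [hν.fnA _ _ _ hb' hb]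
        exact hlt
      obtain ⟨a, ha, hna⟩ := this
      refine ⟨a, ha, hν.sub _ _ ha, fun a' ha' => ?_⟩
      by_cases e : x i = a
      · rw [← e]; exact hc₁.2 _ ha'
      · exact gpref_trans ((gpref_total (N := fun c => E c b₁) _ hc₁.1 (hν.sub _ _ ha) e).resolve_left hna) (hc₁.2 _ ha')
  obtain ⟨a, ha, hca⟩ := this
  obtain ⟨j, hj, rfl⟩ := hWD _ _ ha hca
  exact ⟨j, hj, hc₁, hbest⟩

theorem opt_iff [Fintype I] {p : GProf E n k} {x : I → A} {y : I → B}
    (hx : Function.Injective x) (hy : Function.Injective y) (hs : GStable p (mat x y)) :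
    GWOpt p (mat x y) ↔ ¬ ∃ S, Trap p x y S := by
  constructor
  · rintro h ⟨S, hS⟩
    exact not_opt_of_trap hx hy hs hS h
  · intro h
    by_contra hno
    exact h (exists_trap hx hy hs hno)

/-- the sign weight of a permutation -/
def cw [Fintype I] [DecidableEq I] (σ : Equiv.Perm I) : ℤ :=
  (Equiv.Perm.sign σ : ℤ) * ∏ i, if σ i = i then 1 else -1

theorem cw_inv [Fintype I] [DecidableEq I] (σ : Equiv.Perm I) : cw σ⁻¹ = cw σ := by
  unfold cw
  rw [Equiv.Perm.sign_inv]
  congr 1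
  refine Finset.prod_congr rfl fun i _ => ?_
  have : σ⁻¹ i = i ↔ σ i = i := by
    rw [Equiv.Perm.inv_eq_iff_eq]; exact eq_comm
  simp only [this]

open Classical in
theorem sum_cw [Fintype I] (R : I → I → Prop) (hR : ∀ i j j', R i j → R i j' → j = j')
    (hirr : ∀ i, ¬ R i i) :
    (∑ σ : Equiv.Perm I, if ∀ i, σ i ≠ i → R i (σ i) then cw σ else 0) =
      if ∃ S : Finset I, S.Nonempty ∧ ∀ i ∈ S, ∃ j ∈ S, R i j then 0 else 1 := by
  split_ifs with h
  · let T : Matrix I I ℤ := Matrix.of fun i j => if R i j then 1 else 0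
    have hdet : (1 - T).det = 0 := by
      apply Matrix.exists_mulVec_eq_zero_iff.1
      let al : I → Prop := fun i => ∃ S : Finset I, i ∈ S ∧ ∀ i ∈ S, ∃ j ∈ S, R i j
      refine ⟨fun i => if al i then 1 else 0, ?_, ?_⟩
      · obtain ⟨S, ⟨i, hi⟩, hS⟩ := h
        intro h0
        have := congrFun h0 i
        simp only [Pi.zero_apply] at this
        rw [if_pos ⟨S, hi, hS⟩] at this
        exact one_ne_zero this
      · rw [Matrix.sub_mulVec, Matrix.one_mulVec, sub_eq_zero]
        funext i
        simp only [Matrix.mulVec, dotProduct, T, Matrix.of_apply]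
        by_cases hi : ∃ j, R i j
        · obtain ⟨j, hj⟩ := hi
          rw [Finset.sum_eq_single j]
          · have : al i ↔ al j := by
              constructor
              · rintro ⟨S, hiS, hS⟩
                obtain ⟨j', hj', hr⟩ := hS i hiS
                exact ⟨S, hR _ _ _ hr hj ▸ hj', hS⟩
              · rintro ⟨S, hjS, hS⟩
                refine ⟨insert i S, Finset.mem_insert_self _ _, fun l hl => ?_⟩
                rcases Finset.mem_insert.1 hl with rfl | hl
                · exact ⟨j, Finset.mem_insert_of_mem hjS, hj⟩
                · obtain ⟨m, hm, hr⟩ := hS l hl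
                  exact ⟨m, Finset.mem_insert_of_mem hm, hr⟩
            simp [hj, this]
          · intro j' _ hne
            have : ¬ R i j' := fun h' => hne (hR _ _ _ h' hj)
            simp [this]
          · simp
        · have h1 : ¬ al i := by
            rintro ⟨S, hiS, hS⟩
            obtain ⟨j, _, hj⟩ := hS i hiS
            exact hi ⟨j, hj⟩
          rw [if_neg h1, Finset.sum_eq_zero]
          intro j _
          have : ¬ R i j := fun h' => hi ⟨j, h'⟩
          simp [this]
    refine Eq.trans ?_ hdet
    rw [← Matrix.det_transpose, Matrix.det_apply']
    refine Finset.sum_congr rfl fun σ _ => ?_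
    have hterm : ∀ i, (1 - T).transpose (σ i) i =
        if σ i = i then 1 else if R i (σ i) then -1 else 0 := by
      intro i
      simp only [Matrix.transpose_apply, Matrix.sub_apply, T, Matrix.of_apply, Matrix.one_apply]
      by_cases e : σ i = i
      · simp [e, hirr]
      · have e' : i ≠ σ i := fun h => e h.symm
        simp only [if_neg e, if_neg e']
        split_ifs <;> simp
    simp only [hterm]
    split_ifs with hσ
    · unfold cw
      congr 1
      refine Finset.prod_congr rfl fun i _ => ?_
      by_cases e : σ i = i
      · simp [e]
      · simp [e, hσ i e]
    · push Not at hσ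
      obtain ⟨i, hi, hr⟩ := hσ
      symm
      apply mul_eq_zero_of_right
      apply Finset.prod_eq_zero (Finset.mem_univ i)
      simp [hi, hr]
  · rw [Finset.sum_eq_single 1]
    · simp [cw]
    · intro σ _ hne
      rw [if_neg]
      intro hσ
      apply h
      refine ⟨Finset.univ.filter (fun i => σ i ≠ i), ?_, ?_⟩
      · by_contra hem
        apply hne
        ext i
        by_contra hi
        exact hem ⟨i, by simpa using hi⟩
      · intro i hi
        have hi : σ i ≠ i := by simpa using hi
        exact ⟨σ i, by simpa using hi, hσ i hi⟩
    · simp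

/-- profiles whose blocking pairs are exactly the ones described by `σ`. -/
def Q2 (x : I → A) (y : I → B) (σ : Equiv.Perm I) (p : GProf E n k) : Prop :=
  ∀ a b, GBlocks p (mat x y) a b ↔ ∃ i, σ i ≠ i ∧ x i = a ∧ y (σ i) = b

def Q1 (x : I → A) (y : I → B) (σ : Equiv.Perm I) (p : GProf E n k) : Prop :=
  (∀ a b, ¬ GBlocks p (mat x y) a b) ∧ ∀ i, σ i ≠ i → Step p x y i (σ i)

def twist (s : A → Equiv.Perm B) (hs : ∀ a b, E a b ↔ E a (s a b)) (p : GProf E n k) :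
    GProf E n k :=
  (fun a => ((s a).subtypeEquiv (hs a)).trans (p.1 a), p.2)

theorem gpref_twist (s : A → Equiv.Perm B) (hs : ∀ a b, E a b ↔ E a (s a b)) (p : GProf E n k)
    (a : A) (b b' : B) :
    gpref ((twist s hs p).1 a) b b' ↔ gpref (p.1 a) (s a b) (s a b') := by
  constructor
  · rintro ⟨h, h', hl⟩
    exact ⟨(hs a b).1 h, (hs a b').1 h', hl⟩
  · rintro ⟨h, h', hl⟩
    exact ⟨(hs a b).2 h, (hs a b').2 h', hl⟩

theorem card_Q {x : I → A} {y : I → B}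
    (hx : Function.Injective x) (hy : Function.Injective y) (hE : ∀ i, E (x i) (y i))
    (σ : Equiv.Perm I) :
    Nat.card {p : GProf E n k // Q1 x y σ p} = Nat.card {p : GProf E n k // Q2 x y σ p} := by
  classical
  by_cases hEσ : ∀ i, E (x i) (y (σ i))
  swap
  · push Not at hEσ
    obtain ⟨i, hi⟩ := hEσ
    have hne : σ i ≠ i := fun e => hi (e.symm ▸ hE i)
    have h1 : IsEmpty {p : GProf E n k // Q1 x y σ p} :=
      ⟨fun p => hi (p.2.2 i hne).1.1⟩
    have h2 : IsEmpty {p : GProf E n k // Q2 x y σ p} :=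
      ⟨fun p => hi ((p.2 _ _).2 ⟨i, hne, rfl, rfl⟩).1⟩
    rw [Nat.card_of_isEmpty, Nat.card_of_isEmpty]
  have hsx : ∀ a, ∃ s : Equiv.Perm B, (∀ i, x i = a → s = Equiv.swap (y i) (y (σ i))) ∧
      ((¬ ∃ i, x i = a) → s = 1) := by
    intro a
    by_cases h : ∃ i, x i = a
    · obtain ⟨i, rfl⟩ := h
      exact ⟨Equiv.swap (y i) (y (σ i)), fun j e => by rw [hx e], fun h => absurd ⟨i, rfl⟩ h⟩
    · exact ⟨1, fun i e => absurd ⟨i, e⟩ h, fun _ => rfl⟩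
  choose s hs1 hs2 using hsx
  have hinv : ∀ a b, s a (s a b) = b := by
    intro a b
    by_cases h : ∃ i, x i = a
    · obtain ⟨i, hi⟩ := h
      rw [hs1 a i hi]; simp
    · rw [hs2 a h]; simp
  have hsE' : ∀ a b, E a b → E a (s a b) := by
    intro a b hab
    by_cases h : ∃ i, x i = a
    · obtain ⟨i, rfl⟩ := h
      rw [hs1 _ i rfl, Equiv.swap_apply_def]
      split_ifs
      · exact hEσ i
      · exact hE i
      · exact hab
    · rw [hs2 a h]; exact hab
  have hsE : ∀ a b, E a b ↔ E a (s a b) := fun a b =>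
    ⟨hsE' a b, fun h => by have := hsE' _ _ h; rwa [hinv] at this⟩
  have htw : Function.Involutive (twist (n := n) (k := k) s hsE) := by
    intro p
    refine Prod.ext ?_ rfl
    funext a
    ext b
    have : (⟨s a (s a b.1), by rw [hinv]; exact b.2⟩ : {b // E a b}) = b := Subtype.ext (hinv a b.1)
    change ((p.1 a ⟨s a (s a b.1), _⟩ : Fin (n a)) : ℕ) = _
    rw [this]
  refine Nat.card_congr (Equiv.subtypeEquiv htw.toPerm fun p => ?_)
  change Q1 x y σ p ↔ Q2 x y σ (twist s hsE p)
  have hbl : ∀ a b, GBlocks (twist s hsE p) (mat x y) a b ↔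
      Cand p (mat x y) a b ∧ ∀ b', mat x y a b' → gpref (p.1 a) (s a b) (s a b') := by
    intro a b
    simp only [GBlocks, gpref_twist, Cand]
    change (_ ∧ _ ∧ ∀ a', mat x y a' b → gpref (p.2 b) a a') ↔ _
    tauto
  have hbl1 : ∀ a b, GBlocks p (mat x y) a b ↔
      Cand p (mat x y) a b ∧ ∀ b', mat x y a b' → gpref (p.1 a) b b' := by
    intro a b
    simp only [GBlocks, Cand]
    tauto
  have hmx : ∀ i (P : B → Prop), (∀ b', mat x y (x i) b' → P b') ↔ P (y i) := by
    intro i P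
    constructor
    · intro h; exact h _ ⟨i, rfl, rfl⟩
    · rintro h b' ⟨j, e, rfl⟩
      cases hx e; exact h
  have hnc : ∀ i, ¬ Cand p (mat x y) (x i) (y i) := fun i h =>
    gpref_irrefl _ _ (h.2 (x i) ⟨i, rfl, rfl⟩)
  -- trivial `a`
  have htriv : ∀ a, (∀ i, x i = a → σ i = i) → s a = 1 := by
    intro a h
    by_cases h' : ∃ i, x i = a
    · obtain ⟨i, hi⟩ := h'
      rw [hs1 a i hi, h i hi, Equiv.swap_self]; rfl
    · exact hs2 a h'
  have hyne : ∀ i, σ i ≠ i → y i ≠ y (σ i) := fun i h e => h (hy e).symm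
  have hsy : ∀ i, s (x i) (y i) = y (σ i) := fun i => by rw [hs1 _ i rfl]; simp
  have hsσ : ∀ i, s (x i) (y (σ i)) = y i := fun i => by rw [hs1 _ i rfl]; simp
  have hso : ∀ i b, b ≠ y i → b ≠ y (σ i) → s (x i) b = b := fun i b h h' => by
    rw [hs1 _ i rfl, Equiv.swap_apply_of_ne_of_ne h h']
  constructor
  · rintro ⟨hst, hstep⟩ a b
    by_cases ha : ∃ i, x i = a ∧ σ i ≠ i
    · obtain ⟨i, rfl, hi⟩ := ha
      rw [hbl, hmx i (fun b' => gpref (p.1 (x i)) (s (x i) b) (s (x i) b')), hsy]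
      constructor
      · rintro ⟨hc, hp⟩
        refine ⟨i, hi, rfl, ?_⟩
        by_contra hne
        have hb0 : b ≠ y i := by rintro rfl; exact hnc i hc
        rw [hso i b hb0 (Ne.symm hne)] at hp
        rcases (hstep i hi).2 b hc with e | e
        · exact hne e.symm
        · exact gpref_irrefl _ _ (gpref_trans e hp)
      · rintro ⟨j, _, e, rfl⟩
        cases hx e
        refine ⟨(hstep i hi).1, ?_⟩
        rw [hsσ]
        refine (gpref_total _ (hE i) (hEσ i) (hyne i hi)).resolve_right fun h => ?_
        refine hst (x i) (y (σ i)) ((hbl1 _ _).2 ⟨(hstep i hi).1, ?_⟩)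
        exact (hmx i _).2 h
    · push Not at ha
      rw [hbl, htriv a ha]
      constructor
      · intro h
        exact absurd ((hbl1 a b).2 h) (hst a b)
      · rintro ⟨i, hi, e, _⟩
        exact absurd (ha i e) hi
  · intro hQ
    have key : ∀ i, σ i ≠ i → Cand p (mat x y) (x i) (y (σ i)) ∧
        gpref (p.1 (x i)) (y i) (y (σ i)) ∧
        ∀ b, Cand p (mat x y) (x i) b → b = y (σ i) ∨ gpref (p.1 (x i)) (y (σ i)) b := by
      intro i hi
      have h1 := (hQ (x i) (y (σ i))).2 ⟨i, hi, rfl, rfl⟩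
      rw [hbl, hmx i (fun b' => gpref (p.1 (x i)) (s (x i) (y (σ i))) (s (x i) b')), hsy, hsσ] at h1
      refine ⟨h1.1, h1.2, fun b hc => ?_⟩
      by_cases e : b = y (σ i)
      · exact Or.inl e
      · refine Or.inr ((gpref_total _ hc.1 (hEσ i) e).resolve_left fun hp => ?_)
        have hb0 : b ≠ y i := by rintro rfl; exact hnc i hc
        have h2 : GBlocks (twist s hsE p) (mat x y) (x i) b := by
          rw [hbl, hmx i (fun b' => gpref (p.1 (x i)) (s (x i) b) (s (x i) b')), hsy, hso i b hb0 e]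
          exact ⟨hc, hp⟩
        obtain ⟨j, _, e', e''⟩ := (hQ _ _).1 h2
        cases hx e'
        exact e e''.symm
    refine ⟨fun a b hb => ?_, fun i hi => ⟨(key i hi).1, (key i hi).2.2⟩⟩
    rw [hbl1] at hb
    by_cases ha : ∃ i, x i = a ∧ σ i ≠ i
    · obtain ⟨i, rfl, hi⟩ := ha
      rw [hmx i] at hb
      obtain ⟨_, k2, k3⟩ := key i hi
      rcases k3 b hb.1 with rfl | e
      · exact gpref_irrefl _ _ (gpref_trans k2 hb.2)
      · exact gpref_irrefl _ _ (gpref_trans k2 (gpref_trans e hb.2))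
    · push Not at ha
      have h2 : GBlocks (twist s hsE p) (mat x y) a b := by
        rw [hbl, htriv a ha]; exact hb
      obtain ⟨i, hi, e, _⟩ := (hQ _ _).1 h2
      exact hi (ha i e)

open Classical in
theorem card_eq_sum [Finite A] [Finite B] [Fintype I] {x : I → A} {y : I → B}
    (hx : Function.Injective x) (hy : Function.Injective y) (hE : ∀ i, E (x i) (y i)) :
    (Nat.card {p : GProf E n k // GWOpt p (mat x y)} : ℤ) =
      ∑ σ : Equiv.Perm I, cw σ * (Nat.card {p : GProf E n k // Q2 x y σ p} : ℤ) := by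
  have : Fintype (GProf E n k) := Fintype.ofFinite _
  have hcard : ∀ P : GProf E n k → Prop,
      (Nat.card {p // P p} : ℤ) = ∑ p, if P p then 1 else 0 := by
    intro P
    rw [Nat.card_eq_fintype_card, Fintype.card_subtype]
    simp
  have hstab : ∀ p : GProf E n k, GStable p (mat x y) ↔ ∀ a b, ¬ GBlocks p (mat x y) a b := by
    intro p
    refine ⟨fun h => h.nb, fun h => ⟨?_, ?_, ?_, h⟩⟩
    · rintro a b ⟨i, rfl, rfl⟩; exact hE i
    · rintro a b b' ⟨i, rfl, rfl⟩ ⟨j, e, rfl⟩; rw [hx e]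
    · rintro a a' b ⟨i, rfl, rfl⟩ ⟨j, rfl, e⟩; rw [hy e]
  simp_rw [← card_Q hx hy hE, hcard, Finset.mul_sum]
  rw [Finset.sum_comm]
  refine Finset.sum_congr rfl fun p _ => ?_
  by_cases hs : GStable p (mat x y)
  · have h1 := sum_cw (Step p x y) (fun i j j' h h' => step_unique hy h h') not_step_self
    have h2 : ∀ σ, (cw σ * if Q1 x y σ p then (1 : ℤ) else 0) =
        if ∀ i, σ i ≠ i → Step p x y i (σ i) then cw σ else 0 := by
      intro σ
      simp only [Q1, (hstab p).1 hs, not_false_eq_true, implies_true, true_and]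
      split_ifs <;> simp
    simp only [h2]
    rw [h1]
    have h3 := opt_iff hx hy hs
    simp only [Trap] at h3
    by_cases h4 : ∃ S : Finset I, S.Nonempty ∧ ∀ i ∈ S, ∃ j ∈ S, Step p x y i j
    · rw [if_pos h4, if_neg (fun h => h3.1 h h4)]
    · rw [if_neg h4, if_pos (h3.2 h4)]
  · rw [if_neg (fun h => hs h.1), Finset.sum_eq_zero]
    intro σ _
    rw [if_neg (fun h => hs ((hstab p).2 h.1)), mul_zero]

/-- Symmetry. -/
theorem card_symm [Finite A] [Finite B] [Fintype I] {x : I → A} {y : I → B}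
    (hx : Function.Injective x) (hy : Function.Injective y) (hE : ∀ i, E (x i) (y i)) :
    Nat.card {p : GProf E n k // GWOpt p (mat x y)} =
      Nat.card {p : GProf (fun b a => E a b) k n // GWOpt p (mat y x)} := by
  classical
  have h1 := card_eq_sum (n := n) (k := k) hx hy hE
  have h2 := card_eq_sum (E := fun b a => E a b) (n := k) (k := n) hy hx hE
  have : (Nat.card {p : GProf E n k // GWOpt p (mat x y)} : ℤ) =
      Nat.card {p : GProf (fun b a => E a b) k n // GWOpt p (mat y x)} := by
    rw [h1, h2, ← Equiv.sum_comp (Equiv.inv (Equiv.Perm I))]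
    refine Finset.sum_congr rfl fun σ _ => ?_
    simp only [Equiv.inv_apply]
    rw [cw_inv]
    congr 2
    refine Nat.card_congr (Equiv.subtypeEquiv (Equiv.prodComm _ _) fun p => ?_)
    have hb : ∀ a b, GBlocks (E := fun b a => E a b) (n := k) (k := n) (Prod.swap p) (mat y x) b a ↔
        GBlocks p (mat x y) a b := by
      intro a b
      have hm : ∀ a b, mat y x b a ↔ mat x y a b := fun a b => by
        simp only [mat, and_comm]
      simp only [GBlocks, hm, Prod.swap]
      tauto
    change Q2 x y σ⁻¹ p ↔ Q2 y x σ (Prod.swap p)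
    unfold Q2
    rw [forall_comm]
    refine forall_congr' fun b => forall_congr' fun a => ?_
    rw [hb]
    refine iff_congr Iff.rfl ?_
    constructor
    · rintro ⟨i, hi, e1, e2⟩
      refine ⟨σ⁻¹ i, ?_, e2, by simpa using e1⟩
      intro h; apply hi; simpa using h.symm
    · rintro ⟨i, hi, e1, e2⟩
      refine ⟨σ i, ?_, e2, by simpa using e1⟩
      intro h; apply hi; simpa using h.symm
  exact_mod_cast this

end DAsym

/-- For every fixed partial matching `μ ⊆ E`, the number of incomplete preference profiles
for which `μ` is stable and women-optimal equals the number of profiles for which `μ` is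
stable and men-optimal; hence, under the incomplete uniform preference distribution, the
output distributions of WPDA and MPDA are identical. -/
theorem card_womenOptimal_eq_card_menOptimal (E μ : Finset (Mn × Wn))
    (hμ : IsPartialMatching E μ) :
    Nat.card {p : IncProfile E // IsWomenOptimal E p μ} =
      Nat.card {p : IncProfile E // IsMenOptimal E p μ} := by
  classical
  let x : {e // e ∈ μ} → Mn := fun e => e.1.1
  let y : {e // e ∈ μ} → Wn := fun e => e.1.2
  have hx : Function.Injective x := fun e e' h => Subtype.ext (hμ.2 _ e.2 _ e'.2 (Or.inl h))
  have hy : Function.Injective y := fun e e' h => Subtype.ext (hμ.2 _ e.2 _ e'.2 (Or.inr h))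
  have hE : ∀ e, (x e, y e) ∈ E := fun e => hμ.1 e.2
  have hm : DAsym.mat x y = fun a b => (a, b) ∈ μ := by
    funext a b
    apply propext
    constructor
    · rintro ⟨e, rfl, rfl⟩; exact e.2
    · intro h; exact ⟨⟨(a, b), h⟩, rfl, rfl⟩
  have hm' : DAsym.mat y x = fun b a => (a, b) ∈ μ := by
    funext b a
    apply propext
    constructor
    · rintro ⟨e, rfl, rfl⟩; exact e.2
    · intro h; exact ⟨⟨(a, b), h⟩, rfl, rfl⟩
  have key := DAsym.card_symm (E := fun m w => (m, w) ∈ E)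
    (n := fun m => Fintype.card {w : Wn // (m, w) ∈ E})
    (k := fun w => Fintype.card {m : Mn // (m, w) ∈ E}) hx hy hE
  rw [hm, hm'] at key
  have st1 : ∀ (p : IncProfile E) (ν : Finset (Mn × Wn)), IsStable E p ν ↔
      DAsym.GStable (E := fun m w => (m, w) ∈ E)
        (n := fun m => Fintype.card {w : Wn // (m, w) ∈ E})
        (k := fun w => Fintype.card {m : Mn // (m, w) ∈ E}) p (fun a b => (a, b) ∈ ν) := by
    intro p ν
    constructor
    · rintro ⟨h1, h2⟩
      refine ⟨fun a b h => h1.1 h, fun a b b' h h' => ?_, fun a a' b h h' => ?_,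
        fun a b h => h2 ⟨a, b, h⟩⟩
      · exact congrArg Prod.snd (h1.2 _ h _ h' (Or.inl rfl))
      · exact congrArg Prod.fst (h1.2 _ h _ h' (Or.inr rfl))
    · intro h
      refine ⟨⟨fun e he => h.sub e.1 e.2 he, ?_⟩, fun ⟨a, b, hb⟩ => h.nb a b hb⟩
      rintro ⟨a, b⟩ h1 ⟨a', b'⟩ h2 (e | e)
      · simp only at e
        subst e
        rw [h.fnA _ _ _ h1 h2]
      · simp only at e
        subst e
        rw [h.fnB _ _ _ h1 h2]
  have st2 : ∀ (p : IncProfile E) (ν : Finset (Mn × Wn)), IsStable E p ν ↔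
      DAsym.GStable (E := fun w m => (m, w) ∈ E)
        (k := fun m => Fintype.card {w : Wn // (m, w) ∈ E})
        (n := fun w => Fintype.card {m : Mn // (m, w) ∈ E}) (Prod.swap p)
        (fun b a => (a, b) ∈ ν) := by
    intro p ν
    rw [st1]
    constructor
    · intro h
      exact ⟨fun b a => h.sub a b, fun b a a' => h.fnB a a' b, fun b b' a => h.fnA a b b',
        fun b a hb => h.nb a b ⟨hb.1, hb.2.2, hb.2.1⟩⟩
    · intro h
      exact ⟨fun a b => h.sub b a, fun a b b' => h.fnB b b' a, fun a a' b => h.fnA b a a',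
        fun a b hb => h.nb b a ⟨hb.1, hb.2.2, hb.2.1⟩⟩
  have fs : ∀ ν : Mn → Wn → Prop, ∃ N : Finset (Mn × Wn), ν = fun a b => (a, b) ∈ N := by
    intro ν
    exact ⟨Finset.univ.filter (fun e => ν e.1 e.2), by funext a b; simp⟩
  refine Eq.trans ?_ (key.trans (Eq.symm ?_))
  · exact Nat.card_congr (Equiv.subtypeEquiv (Equiv.refl _) fun p => by
      change _ ↔ DAsym.GWOpt (E := fun m w => (m, w) ∈ E)
        (n := fun m => Fintype.card {w : Wn // (m, w) ∈ E})
        (k := fun w => Fintype.card {m : Mn // (m, w) ∈ E}) p (fun a b => (a, b) ∈ μ)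
      constructor
      · rintro ⟨h1, h2⟩
        refine ⟨(st1 _ _).1 h1, fun ν' hν' => ?_⟩
        obtain ⟨N, rfl⟩ := fs ν'
        exact h2 N ((st1 _ _).2 hν')
      · rintro ⟨h1, h2⟩
        exact ⟨(st1 _ _).2 h1, fun N hN => h2 _ ((st1 _ _).1 hN)⟩)
  · exact Nat.card_congr (Equiv.subtypeEquiv (Equiv.prodComm _ _) fun p => by
      change _ ↔ DAsym.GWOpt (E := fun w m => (m, w) ∈ E)
        (k := fun m => Fintype.card {w : Wn // (m, w) ∈ E})
        (n := fun w => Fintype.card {m : Mn // (m, w) ∈ E}) (Prod.swap p)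
        (fun b a => (a, b) ∈ μ)
      constructor
      · rintro ⟨h1, h2⟩
        refine ⟨(st2 _ _).1 h1, fun ν' hν' => ?_⟩
        obtain ⟨N, hN⟩ := fs (fun a b => ν' b a)
        obtain rfl : ν' = fun b a => (a, b) ∈ N := by
          funext b a; exact congrFun (congrFun hN a) b
        exact fun w' m h => h2 N ((st2 _ _).2 hν') m w' h
      · rintro ⟨h1, h2⟩
        exact ⟨(st2 _ _).2 h1, fun N hN m w' h => h2 _ ((st2 _ _).1 hN) w' m h⟩)

end
end

section
/- Pittel's integral formula for permutations: under the uniform preference distribution (realized by X, Y uniform on ([0,1]^{M×W})², smaller values preferred), for every permutation σ of M ⊔ W, the probability that σ is a stable permutation equals the iterated integral over x ∈ [0,1]^M and y ∈ [0,1]^W of the product of: x_m over all pairs (m,w) with σ(m) = w and σ(w) ≠ m; times y_w over all pairs (m,w) with σ(m) ≠ w and σ(w) = m; times (1 − x_m · y_w) over all pairs (m,w) with σ(m) ≠ w and σ(w) ≠ m. -/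
open MeasureTheory

/-- A permutation `σ` of `M ⊔ W` exchanging the two sides, encoded as the pair of bijections
`a : M ≃ W` (`σ m = a m`) and `b : W ≃ M` (`σ w = b w`), so that `σ⁻¹ m = b.symm m` and
`σ⁻¹ w = a.symm w`.  It is stable for the uniform preference model induced by `XY = (X, Y)`
(smaller values preferred) if every person weakly prefers their successor to their
predecessor and there is no pair `(m, w)` with `σ m ≠ w`, `σ w ≠ m`, `w ≻ₘ σ⁻¹ m`
and `m ≻_w σ⁻¹ w`. -/
def IsStablePerm {N : ℕ} (XY : (Fin N × Fin N → ℝ) × (Fin N × Fin N → ℝ))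
    (a b : Fin N ≃ Fin N) : Prop :=
  (∀ m, a m = b.symm m ∨ XY.1 (m, a m) < XY.1 (m, b.symm m)) ∧
  (∀ w, b w = a.symm w ∨ XY.2 (b w, w) < XY.2 (a.symm w, w)) ∧
  ¬ ∃ m w, a m ≠ w ∧ b w ≠ m ∧
    XY.1 (m, w) < XY.1 (m, b.symm m) ∧ XY.2 (m, w) < XY.2 (a.symm w, w)

/-- The uniform probability measure on `([0,1]^{M×W})²`. -/
noncomputable def unifBox (N : ℕ) :
    Measure ((Fin N × Fin N → ℝ) × (Fin N × Fin N → ℝ)) :=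
  (Measure.pi fun _ : Fin N × Fin N => volume.restrict (Set.Icc (0:ℝ) 1)).prod
    (Measure.pi fun _ : Fin N × Fin N => volume.restrict (Set.Icc (0:ℝ) 1))

/-- Overwrite the coordinates `p` with `f (g p) = p` of `z.2` by those of `z.1`. -/
def overwrite {ι κ : Type*} [DecidableEq ι] (f : κ → ι) (g : ι → κ)
    (z : (κ → ℝ) × (ι → ℝ)) : ι → ℝ :=
  fun p => if f (g p) = p then z.1 (g p) else z.2 p

lemma measurable_overwrite {ι κ : Type*} [DecidableEq ι] (f : κ → ι) (g : ι → κ) :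
    Measurable (overwrite f g) := by
  refine measurable_pi_lambda _ fun p => ?_
  unfold overwrite
  split_ifs <;> fun_prop

lemma measurePreserving_overwrite {ι κ : Type*} [DecidableEq ι] [Fintype ι] [Fintype κ]
    (f : κ → ι) (g : ι → κ) (hgf : ∀ k, g (f k) = k) (μ : Measure ℝ) [IsProbabilityMeasure μ] :
    MeasurePreserving (overwrite f g)
      ((Measure.pi fun _ : κ => μ).prod (Measure.pi fun _ : ι => μ))
      (Measure.pi fun _ : ι => μ) := by
  refine ⟨measurable_overwrite f g, (Measure.pi_eq fun s hs => ?_).symm⟩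
  have hpre : overwrite f g ⁻¹' Set.univ.pi s =
      (Set.univ.pi fun k => s (f k)) ×ˢ
        (Set.univ.pi fun p => if f (g p) = p then Set.univ else s p) := by
    ext ⟨x, X⟩
    simp only [overwrite, Set.mem_preimage, Set.mem_pi, Set.mem_univ, forall_true_left,
      Set.mem_prod]
    constructor
    · intro h
      refine ⟨fun k => ?_, fun p => ?_⟩
      · have := h (f k)
        simpa [hgf] using this
      · have := h p
        split_ifs with hp
        · trivial
        · simpa [hp] using this
    · rintro ⟨h1, h2⟩ p
      split_ifs with hp
      · have := h1 (g p)
        rwa [hp] at this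
      · have := h2 p
        simpa [hp] using this
  rw [Measure.map_apply (measurable_overwrite f g) (MeasurableSet.univ_pi hs), hpre,
    Measure.prod_prod, Measure.pi_pi, Measure.pi_pi]
  have h1 : ∀ p, μ (if f (g p) = p then Set.univ else s p) =
      if f (g p) = p then 1 else μ (s p) := by
    intro p; split_ifs <;> simp
  simp_rw [h1]
  rw [Finset.prod_ite, Finset.prod_const_one, one_mul,
    ← Finset.prod_filter_mul_prod_filter_not Finset.univ (fun p => f (g p) = p)
      (fun p => μ (s p))]
  congr 1
  refine Finset.prod_bij' (fun k _ => f k) (fun p _ => g p) ?_ ?_ ?_ ?_ ?_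
  · intro k _; simp [hgf]
  · intro p _; simp
  · intro k _; exact hgf k
  · intro p hp; simpa using hp
  · intro k _; rfl

lemma lintegral_prod_comm4 {A B C D : Type*} [MeasurableSpace A] [MeasurableSpace B]
    [MeasurableSpace C] [MeasurableSpace D] (μ : Measure A) (ρ : Measure B) (ν : Measure C)
    (τ : Measure D) [SFinite μ] [SFinite ρ] [SFinite ν] [SFinite τ]
    (F : (A × B) × (C × D) → ENNReal) (hF : Measurable F) :
    ∫⁻ z, F z ∂((μ.prod ρ).prod (ν.prod τ)) =
      ∫⁻ z, ∫⁻ u, F ((z.1, u.1), (z.2, u.2)) ∂(ρ.prod τ) ∂(μ.prod ν) := by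
  have hm : Measurable fun q : (A × C) × (B × D) => F ((q.1.1, q.2.1), (q.1.2, q.2.2)) := by
    fun_prop
  rw [lintegral_prod _ hF.aemeasurable, lintegral_prod _ hF.lintegral_prod_right'.aemeasurable,
    lintegral_prod _ hm.lintegral_prod_right'.aemeasurable]
  refine lintegral_congr fun x => ?_
  have h1 : ∀ X, ∫⁻ q, F ((x, X), q) ∂(ν.prod τ) = ∫⁻ y, ∫⁻ Y, F ((x, X), (y, Y)) ∂τ ∂ν :=
    fun X => lintegral_prod _ (by fun_prop)
  have h2 : ∀ y, ∫⁻ u, F ((x, u.1), (y, u.2)) ∂(ρ.prod τ) =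
      ∫⁻ X, ∫⁻ Y, F ((x, X), (y, Y)) ∂τ ∂ρ :=
    fun y => lintegral_prod _ (by fun_prop)
  simp_rw [h1, h2]
  refine lintegral_lintegral_swap ?_
  have : Measurable fun q : (B × C) × D => F ((x, q.1.1), (q.1.2, q.2)) := by fun_prop
  exact this.lintegral_prod_right'.aemeasurable

/-- The uniform measure on the unit interval. -/
noncomputable abbrev unifI : Measure ℝ := volume.restrict (Set.Icc (0:ℝ) 1)

instance : IsProbabilityMeasure unifI := ⟨by simp [unifI]⟩

lemma unifI_Iio {x : ℝ} (hx : x ∈ Set.Icc (0:ℝ) 1) : unifI (Set.Iio x) = ENNReal.ofReal x := by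
  rw [unifI, Measure.restrict_apply measurableSet_Iio]
  have : Set.Iio x ∩ Set.Icc (0:ℝ) 1 = Set.Ico 0 x := by
    ext t; simp only [Set.mem_inter_iff, Set.mem_Iio, Set.mem_Icc, Set.mem_Ico]
    constructor
    · rintro ⟨h1, h2, h3⟩; exact ⟨h2, h1⟩
    · rintro ⟨h1, h2⟩; exact ⟨h2, h1, by linarith [hx.2]⟩
  rw [this, Real.volume_Ico, sub_zero]

/-- The constraint set on the pair of coordinates at `p`. -/
def cset {N : ℕ} (a b : Fin N ≃ Fin N) (x y : Fin N → ℝ) (p : Fin N × Fin N) : Set (ℝ × ℝ) :=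
  if a p.1 = p.2 then
    if b p.2 = p.1 then Set.univ else Set.Iio (x p.1) ×ˢ Set.univ
  else
    if b p.2 = p.1 then Set.univ ×ˢ Set.Iio (y p.2)
    else (Set.Iio (x p.1) ×ˢ Set.Iio (y p.2))ᶜ

/-- The corresponding factor. -/
def cfac {N : ℕ} (a b : Fin N ≃ Fin N) (x y : Fin N → ℝ) (p : Fin N × Fin N) : ℝ :=
  if a p.1 = p.2 then
    if b p.2 = p.1 then 1 else x p.1
  else
    if b p.2 = p.1 then y p.2 else (1 - x p.1 * y p.2)

lemma cfac_nonneg {N : ℕ} (a b : Fin N ≃ Fin N) (x y : Fin N → ℝ) (p : Fin N × Fin N)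
    (hx : ∀ m, x m ∈ Set.Icc (0:ℝ) 1) (hy : ∀ m, y m ∈ Set.Icc (0:ℝ) 1) :
    0 ≤ cfac a b x y p := by
  have h1 := hx p.1
  have h2 := hy p.2
  unfold cfac
  split_ifs
  · norm_num
  · exact h1.1
  · exact h2.1
  · nlinarith [h1.1, h1.2, h2.1, h2.2]

lemma measure_cset {N : ℕ} (a b : Fin N ≃ Fin N) (x y : Fin N → ℝ) (p : Fin N × Fin N)
    (hx : ∀ m, x m ∈ Set.Icc (0:ℝ) 1) (hy : ∀ m, y m ∈ Set.Icc (0:ℝ) 1) :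
    (unifI.prod unifI) (cset a b x y p) = ENNReal.ofReal (cfac a b x y p) := by
  unfold cset cfac
  split_ifs
  · rw [measure_univ, ENNReal.ofReal_one]
  · rw [Measure.prod_prod, unifI_Iio (hx _), measure_univ, mul_one]
  · rw [Measure.prod_prod, unifI_Iio (hy _), measure_univ, one_mul]
  · rw [measure_compl (measurableSet_Iio.prod measurableSet_Iio) (measure_ne_top _ _),
      Measure.prod_prod, unifI_Iio (hy _), unifI_Iio (hx _), measure_univ,
      ← ENNReal.ofReal_mul (hx _).1, ← ENNReal.ofReal_one,
      ← ENNReal.ofReal_sub _ (mul_nonneg (hx _).1 (hy _).1)]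

lemma measure_slice {N : ℕ} (a b : Fin N ≃ Fin N) (x y : Fin N → ℝ)
    (hx : ∀ m, x m ∈ Set.Icc (0:ℝ) 1) (hy : ∀ m, y m ∈ Set.Icc (0:ℝ) 1) :
    (unifBox N) {u | ∀ p, (u.1 p, u.2 p) ∈ cset a b x y p} =
      ENNReal.ofReal (∏ p, cfac a b x y p) := by
  have hmp := measurePreserving_arrowProdEquivProdArrow ℝ ℝ (Fin N × Fin N)
    (fun _ => unifI) (fun _ => unifI)
  have := hmp.measure_preimage_equiv {u | ∀ p, (u.1 p, u.2 p) ∈ cset a b x y p}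
  unfold unifBox
  rw [← this]
  have h2 : (MeasurableEquiv.arrowProdEquivProdArrow ℝ ℝ (Fin N × Fin N)) ⁻¹'
      {u | ∀ p, (u.1 p, u.2 p) ∈ cset a b x y p} = Set.univ.pi (cset a b x y) := by
    ext u
    simp only [Set.mem_preimage, Set.mem_ofPred_eq, Set.mem_pi, Set.mem_univ, forall_true_left]
    rfl
  rw [h2, Measure.pi_pi, ENNReal.ofReal_prod_of_nonneg
    (fun p _ => cfac_nonneg a b x y p hx hy)]
  exact Finset.prod_congr rfl fun p _ => measure_cset a b x y p hx hy

lemma stable_overwrite_iff {N : ℕ} (a b : Fin N ≃ Fin N) (x y : Fin N → ℝ)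
    (X Y : Fin N × Fin N → ℝ) :
    IsStablePerm (overwrite (fun m => (m, b.symm m)) Prod.fst (x, X),
      overwrite (fun w => (a.symm w, w)) Prod.snd (y, Y)) a b ↔
    ∀ p, (X p, Y p) ∈ cset a b x y p := by
  have hX : ∀ m w, overwrite (fun m => (m, b.symm m)) Prod.fst (x, X) (m, w) =
      if b w = m then x m else X (m, w) := by
    intro m w
    simp only [overwrite, Prod.mk.injEq, true_and, Equiv.symm_apply_eq, @eq_comm _ m (b w)]
  have hY : ∀ m w, overwrite (fun w => (a.symm w, w)) Prod.snd (y, Y) (m, w) =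
      if a m = w then y w else Y (m, w) := by
    intro m w
    simp only [overwrite, Prod.mk.injEq, and_true, Equiv.symm_apply_eq, @eq_comm _ w (a m)]
  unfold IsStablePerm
  simp only [hX, hY, Equiv.apply_symm_apply, if_true]
  constructor
  · rintro ⟨h1, h2, h3⟩ ⟨m, w⟩
    unfold cset
    dsimp only
    split_ifs with ha hb hb
    · trivial
    · subst ha
      rcases h1 m with h | h
      · exact absurd (by rw [h, Equiv.apply_symm_apply]) hb
      · rw [if_neg hb] at h
        exact ⟨h, trivial⟩
    · subst hb
      rcases h2 w with h | h
      · exact absurd (by rw [h, Equiv.apply_symm_apply]) ha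
      · rw [if_neg ha] at h
        exact ⟨trivial, h⟩
    · rintro ⟨hx, hy⟩
      refine h3 ⟨m, w, ha, hb, ?_, ?_⟩
      · rw [if_neg hb]; exact hx
      · rw [if_neg ha]; exact hy
  · intro h
    refine ⟨fun m => ?_, fun w => ?_, ?_⟩
    · by_cases hb : b (a m) = m
      · left; rw [Equiv.eq_symm_apply]; exact hb
      · right
        have := h (m, a m)
        simp only [cset, hb, if_true, if_false] at this
        rw [if_neg hb]
        exact this.1
    · by_cases ha : a (b w) = w
      · left; rw [Equiv.eq_symm_apply]; exact ha
      · right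
        have := h (b w, w)
        simp only [cset, ha, if_true, if_false] at this
        rw [if_neg ha]
        exact this.2
    · rintro ⟨m, w, ha, hb, h1, h2⟩
      have := h (m, w)
      simp only [cset, ha, hb, if_false] at this
      rw [if_neg hb] at h1
      rw [if_neg ha] at h2
      exact this ⟨h1, h2⟩

lemma measurableSet_stable {N : ℕ} (a b : Fin N ≃ Fin N) :
    MeasurableSet {XY | IsStablePerm XY a b} := by
  have hlt : ∀ p q : Fin N × Fin N, MeasurableSet
      {XY : (Fin N × Fin N → ℝ) × (Fin N × Fin N → ℝ) | XY.1 p < XY.1 q} := fun p q =>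
    measurableSet_lt (by fun_prop) (by fun_prop)
  have hlt2 : ∀ p q : Fin N × Fin N, MeasurableSet
      {XY : (Fin N × Fin N → ℝ) × (Fin N × Fin N → ℝ) | XY.2 p < XY.2 q} := fun p q =>
    measurableSet_lt (by fun_prop) (by fun_prop)
  unfold IsStablePerm
  simp only [Set.ofPred_and, Set.ofPred_forall, Set.ofPred_or, not_exists, not_and]
  refine MeasurableSet.inter ?_ (MeasurableSet.inter ?_ ?_)
  · exact MeasurableSet.iInter fun m => (MeasurableSet.const _).union (hlt _ _)
  · exact MeasurableSet.iInter fun m => (MeasurableSet.const _).union (hlt2 _ _)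
  · refine MeasurableSet.iInter fun m => MeasurableSet.iInter fun w =>
      MeasurableSet.iInter fun _ => MeasurableSet.iInter fun _ => ?_
    exact MeasurableSet.imp (hlt _ _) (hlt2 _ _).compl

lemma prod_cfac {N : ℕ} (a b : Fin N ≃ Fin N) (x y : Fin N → ℝ) :
    (∏ mw ∈ Finset.univ.filter fun mw : Fin N × Fin N => a mw.1 = mw.2 ∧ b mw.2 ≠ mw.1,
              x mw.1) *
          (∏ mw ∈ Finset.univ.filter fun mw : Fin N × Fin N => a mw.1 ≠ mw.2 ∧ b mw.2 = mw.1,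
              y mw.2) *
          ∏ mw ∈ Finset.univ.filter fun mw : Fin N × Fin N => a mw.1 ≠ mw.2 ∧ b mw.2 ≠ mw.1,
            (1 - x mw.1 * y mw.2) = ∏ p, cfac a b x y p := by
  rw [Finset.prod_filter, Finset.prod_filter, Finset.prod_filter, ← Finset.prod_mul_distrib,
    ← Finset.prod_mul_distrib]
  refine Finset.prod_congr rfl fun p _ => ?_
  unfold cfac
  by_cases ha : a p.1 = p.2 <;> by_cases hb : b p.2 = p.1 <;> simp [ha, hb]

lemma continuous_prod_cfac {N : ℕ} (a b : Fin N ≃ Fin N) :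
    Continuous fun z : (Fin N → ℝ) × (Fin N → ℝ) => ∏ p, cfac a b z.1 z.2 p := by
  refine continuous_finsetProd _ fun p _ => ?_
  unfold cfac
  split_ifs <;> fun_prop

lemma ae_mem_box (N : ℕ) :
    ∀ᵐ x ∂(Measure.pi fun _ : Fin N => unifI), ∀ m, x m ∈ Set.Icc (0:ℝ) 1 := by
  rw [ae_all_iff]
  intro m
  exact (Measure.quasiMeasurePreserving_eval (fun _ : Fin N => unifI) m).ae
    (ae_restrict_mem measurableSet_Icc)

lemma unifBox_stable {N : ℕ} (a b : Fin N ≃ Fin N) :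
    unifBox N {XY | IsStablePerm XY a b} =
      ∫⁻ z, ENNReal.ofReal (∏ p, cfac a b z.1 z.2 p)
        ∂((Measure.pi fun _ : Fin N => unifI).prod (Measure.pi fun _ : Fin N => unifI)) := by
  have h1 := measurePreserving_overwrite (fun m : Fin N => (m, b.symm m)) Prod.fst
    (fun _ => rfl) unifI
  have h2 := measurePreserving_overwrite (fun w : Fin N => (a.symm w, w)) Prod.snd
    (fun _ => rfl) unifI
  have h := h1.prod h2
  have hS := measurableSet_stable a b
  have hS' := h.measurable hS
  unfold unifBox
  rw [← h.measure_preimage hS.nullMeasurableSet, ← lintegral_indicator_one hS',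
    lintegral_prod_comm4 _ _ _ _ _ (measurable_one.indicator hS')]
  refine lintegral_congr_ae ?_
  have hx := (Measure.quasiMeasurePreserving_fst (μ := Measure.pi fun _ : Fin N => unifI)
    (ν := Measure.pi fun _ : Fin N => unifI)).ae (ae_mem_box N)
  have hy := (Measure.quasiMeasurePreserving_snd (μ := Measure.pi fun _ : Fin N => unifI)
    (ν := Measure.pi fun _ : Fin N => unifI)).ae (ae_mem_box N)
  filter_upwards [hx, hy] with z hzx hzy
  rw [← measure_slice a b z.1 z.2 hzx hzy]
  have hset : {u : (Fin N × Fin N → ℝ) × (Fin N × Fin N → ℝ) |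
      ∀ p, (u.1 p, u.2 p) ∈ cset a b z.1 z.2 p} =
      (fun u => ((z.1, u.1), (z.2, u.2))) ⁻¹' (Prod.map
        (overwrite (fun m : Fin N => (m, b.symm m)) Prod.fst)
        (overwrite (fun w : Fin N => (a.symm w, w)) Prod.snd) ⁻¹'
        {XY | IsStablePerm XY a b}) := by
    ext u
    exact (stable_overwrite_iff a b z.1 z.2 u.1 u.2).symm
  have hm : Measurable fun u : (Fin N × Fin N → ℝ) × (Fin N × Fin N → ℝ) =>
      ((z.1, u.1), (z.2, u.2)) := by fun_prop
  rw [hset, ← lintegral_indicator_one (hm hS')]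
  rfl

/-- Pittel's integral formula: under the uniform preference distribution, the probability
that a fixed permutation `σ = (a, b)` is stable equals the iterated integral over
`x ∈ [0,1]^M`, `y ∈ [0,1]^W` of `∏ x_m · ∏ y_w · ∏ (1 - x_m y_w)`, the products running
respectively over pairs with `σ m = w ∧ σ w ≠ m`, with `σ m ≠ w ∧ σ w = m`, and with
`σ m ≠ w ∧ σ w ≠ m`. -/
theorem prob_stablePerm_eq_integral (N : ℕ) (hN : 1 ≤ N) (a b : Fin N ≃ Fin N) :
    (unifBox N {XY | IsStablePerm XY a b}).toReal =
      ∫ x in Set.univ.pi fun _ : Fin N => Set.Icc (0:ℝ) 1,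
        ∫ y in Set.univ.pi fun _ : Fin N => Set.Icc (0:ℝ) 1,
          (∏ mw ∈ Finset.univ.filter fun mw : Fin N × Fin N => a mw.1 = mw.2 ∧ b mw.2 ≠ mw.1,
              x mw.1) *
          (∏ mw ∈ Finset.univ.filter fun mw : Fin N × Fin N => a mw.1 ≠ mw.2 ∧ b mw.2 = mw.1,
              y mw.2) *
          ∏ mw ∈ Finset.univ.filter fun mw : Fin N × Fin N => a mw.1 ≠ mw.2 ∧ b mw.2 ≠ mw.1,
            (1 - x mw.1 * y mw.2) := by
  have hbox : (volume : Measure (Fin N → ℝ)).restrict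
      (Set.univ.pi fun _ : Fin N => Set.Icc (0:ℝ) 1) = Measure.pi fun _ : Fin N => unifI :=
    Measure.restrict_pi_pi (fun _ : Fin N => (volume : Measure ℝ)) _
  have hcont := continuous_prod_cfac a b
  have hx := (Measure.quasiMeasurePreserving_fst (μ := Measure.pi fun _ : Fin N => unifI)
    (ν := Measure.pi fun _ : Fin N => unifI)).ae (ae_mem_box N)
  have hy := (Measure.quasiMeasurePreserving_snd (μ := Measure.pi fun _ : Fin N => unifI)
    (ν := Measure.pi fun _ : Fin N => unifI)).ae (ae_mem_box N)
  simp_rw [prod_cfac, hbox]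
  have hint : Integrable (fun z : (Fin N → ℝ) × (Fin N → ℝ) => ∏ p, cfac a b z.1 z.2 p)
      ((Measure.pi fun _ : Fin N => unifI).prod (Measure.pi fun _ : Fin N => unifI)) := by
    refine Integrable.of_bound hcont.aestronglyMeasurable 1 ?_
    filter_upwards [hx, hy] with z hzx hzy
    rw [Real.norm_of_nonneg (Finset.prod_nonneg fun p _ => cfac_nonneg a b _ _ p hzx hzy)]
    refine Finset.prod_le_one (fun p _ => cfac_nonneg a b _ _ p hzx hzy) fun p _ => ?_
    have h1 := hzx p.1
    have h2 := hzy p.2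
    unfold cfac
    split_ifs
    · exact le_rfl
    · exact h1.2
    · exact h2.2
    · nlinarith [mul_nonneg h1.1 h2.1]
  rw [unifBox_stable, ← integral_eq_lintegral_of_nonneg_ae _ hcont.aestronglyMeasurable,
    integral_prod _ hint]
  filter_upwards [hx, hy] with z hzx hzy
  exact Finset.prod_nonneg fun p _ => cfac_nonneg a b _ _ p hzx hzy
end

section
/- For every complete preference profile there exists a stable matching μ_M that is men-optimal and women-pessimal: for every stable matching μ and every man m, μ_M(m) = μ(m) or μ_M(m) ≻ₘ μ(m), and for every stable matching μ and every woman w, μ⁻¹(w) = μ_M⁻¹(w) or μ⁻¹(w) ≻_w μ_M⁻¹(w). Moreover such μ_M is unique. (Symmetrically there exists a unique women-optimal, men-pessimal stable matching μ_W.) -/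
/-- The matching `μ` is stable for the preference profile `(prefM, prefW)`. -/
def MatchStable {N : ℕ} (prefM prefW : Fin N → Fin N → Fin N → Prop)
    (μ : Fin N ≃ Fin N) : Prop :=
  ¬ ∃ m w, prefM m w (μ m) ∧ prefW w m (μ.symm w)

/-- A proposal vector reached by deferred acceptance: every woman a man prefers to his current
proposal holds a proposal from a man she prefers to him, and no stable matching does better. -/
def ProposalInv {N : ℕ} (prefM prefW : Fin N → Fin N → Fin N → Prop)
    (f : Fin N → Fin N) : Prop :=
  (∀ m w, prefM m w (f m) → ∃ m', f m' = w ∧ prefW w m' m) ∧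
  (∀ μ : Fin N ≃ Fin N, MatchStable prefM prefW μ → ∀ m, f m = μ m ∨ prefM m (f m) (μ m))

theorem exists_best {N : ℕ} (r : Fin N → Fin N → Prop) (hr : IsStrictTotalOrder (Fin N) r)
    (P : Fin N → Prop) (hP : ∃ w, P w) : ∃ w, P w ∧ ∀ v, P v → w = v ∨ r w v := by
  have wf : WellFounded r := Finite.wellFounded_of_trans_of_irrefl r
  obtain ⟨w, hw, h⟩ := wf.has_min {w | P w} hP
  refine ⟨w, hw, fun v hv => ?_⟩
  have := h v hv
  rcases trichotomous_of r w v with h1 | h1 | h1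
  · exact Or.inr h1
  · exact Or.inl h1
  · exact absurd h1 this

theorem proposal_step {N : ℕ} (prefM prefW : Fin N → Fin N → Fin N → Prop)
    (hM : ∀ m, IsStrictTotalOrder (Fin N) (prefM m))
    (hW : ∀ w, IsStrictTotalOrder (Fin N) (prefW w))
    (f : Fin N → Fin N) (hf : ProposalInv prefM prefW f) (m1 m2 : Fin N)
    (he : f m1 = f m2) (hlt : prefW (f m2) m1 m2) :
    ∃ w', prefM m2 (f m2) w' ∧ ProposalInv prefM prefW (Function.update f m2 w') := by
  have iM : ∀ m a, ¬ prefM m a a := fun m a => (hM m).irrefl a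
  have iW : ∀ m a, ¬ prefW m a a := fun m a => (hW m).irrefl a
  have tM : ∀ m a b c, prefM m a b → prefM m b c → prefM m a c := fun m => (hM m).trans
  have tW : ∀ m a b c, prefW m a b → prefW m b c → prefW m a c := fun m => (hW m).trans
  have cM : ∀ m a b, prefM m a b ∨ a = b ∨ prefM m b a := fun m a b =>
    trichotomous_of (prefM m) a b
  have hne : m1 ≠ m2 := by rintro rfl; exact iW _ _ hlt
  obtain ⟨hf1, hf2⟩ := hf
  have hns : ¬ Function.Surjective f := fun hs =>
    hne (Finite.injective_iff_surjective.mpr hs he)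
  have hex : ∃ w0, prefM m2 (f m2) w0 := by
    simp only [Function.Surjective, not_forall, not_exists] at hns
    obtain ⟨w0, hw0⟩ := hns
    refine ⟨w0, ?_⟩
    rcases cM m2 (f m2) w0 with h | h | h
    · exact h
    · exact absurd h (hw0 m2)
    · obtain ⟨m', h', _⟩ := hf1 _ _ h
      exact absurd h' (hw0 m')
  obtain ⟨w', hw', hbest⟩ := exists_best (prefM m2) (hM m2) _ hex
  refine ⟨w', hw', ?_, ?_⟩
  · intro m w hw
    by_cases hm : m = m2
    · subst hm
      rw [Function.update_self] at hw
      rcases cM m w (f m) with h | h | h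
      · obtain ⟨m', h1, h2⟩ := hf1 _ _ h
        have : m' ≠ m := by rintro rfl; exact iW _ _ h2
        exact ⟨m', by rw [Function.update_of_ne this]; exact h1, h2⟩
      · subst h
        exact ⟨m1, by rw [Function.update_of_ne hne]; exact he, hlt⟩
      · rcases hbest w h with h | h
        · subst h; exact absurd hw (iM _ _)
        · exact absurd (tM _ _ _ _ h hw) (iM _ _)
    · rw [Function.update_of_ne hm] at hw
      obtain ⟨m', h1, h2⟩ := hf1 _ _ hw
      by_cases h' : m' = m2
      · subst h'
        subst h1
        exact ⟨m1, by rw [Function.update_of_ne hne]; exact he, tW _ _ _ _ hlt h2⟩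
      · exact ⟨m', by rw [Function.update_of_ne h']; exact h1, h2⟩
  · intro μ hμ m
    by_cases hm : m = m2
    · subst hm
      rw [Function.update_self]
      rcases hf2 μ hμ m with h | h
      · exfalso
        have hsym : μ.symm (f m) = m := by rw [h]; simp
        refine hμ ⟨m1, f m, ?_, by rw [hsym]; exact hlt⟩
        rcases hf2 μ hμ m1 with h' | h'
        · exact absurd (μ.injective (h'.symm.trans (he.trans h))) hne
        · rw [← he]; exact h'
      · exact hbest _ h
    · rw [Function.update_of_ne hm]
      exact hf2 μ hμ m

theorem exists_men_optimal (N : ℕ) (prefM prefW : Fin N → Fin N → Fin N → Prop)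
    (hM : ∀ m, IsStrictTotalOrder (Fin N) (prefM m))
    (hW : ∀ w, IsStrictTotalOrder (Fin N) (prefW w)) :
    ∃! μM : Fin N ≃ Fin N, MatchStable prefM prefW μM ∧
      (∀ μ : Fin N ≃ Fin N, MatchStable prefM prefW μ →
        ∀ m, μM m = μ m ∨ prefM m (μM m) (μ m)) ∧
      (∀ μ : Fin N ≃ Fin N, MatchStable prefM prefW μ →
        ∀ w, μ.symm w = μM.symm w ∨ prefW w (μ.symm w) (μM.symm w)) := by
  classical
  have iM : ∀ m a, ¬ prefM m a a := fun m a => (hM m).irrefl a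
  have iW : ∀ m a, ¬ prefW m a a := fun m a => (hW m).irrefl a
  have tM : ∀ m a b c, prefM m a b → prefM m b c → prefM m a c := fun m => (hM m).trans
  have tW : ∀ m a b c, prefW m a b → prefW m b c → prefW m a c := fun m => (hW m).trans
  have cW : ∀ m a b, prefW m a b ∨ a = b ∨ prefW m b a := fun m a b =>
    trichotomous_of (prefW m) a b
  -- a proposal vector satisfying the invariant, of least total rank
  let rk : (Fin N → Fin N) → ℕ := fun f =>
    ∑ m, (Finset.univ.filter (fun w => prefM m (f m) w)).card
  have hne : ∃ f, ProposalInv prefM prefW f := by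
    choose f _ hf using fun m => exists_best (prefM m) (hM m) (fun _ => True) ⟨m, trivial⟩
    refine ⟨f, fun m w h => ?_, fun μ _ m => hf m _ trivial⟩
    rcases hf m w trivial with h' | h'
    · rw [← h'] at h; exact absurd h (iM _ _)
    · exact absurd (tM _ _ _ _ h h') (iM _ _)
  obtain ⟨f, hf, hmin⟩ := Set.exists_min_image {f | ProposalInv prefM prefW f} rk
    (Set.toFinite _) hne
  have key : ∀ m1 m2, f m1 = f m2 → ¬ prefW (f m2) m1 m2 := by
    intro m1 m2 he hlt
    obtain ⟨w', hw', hinv⟩ := proposal_step prefM prefW hM hW f hf m1 m2 he hlt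
    refine absurd (hmin _ hinv) (not_le.mpr ?_)
    have hlt2 : (Finset.univ.filter (fun w => prefM m2 w' w)).card
        < (Finset.univ.filter (fun w => prefM m2 (f m2) w)).card := by
      apply Finset.card_lt_card
      rw [Finset.ssubset_iff_of_subset]
      · exact ⟨w', by simpa using hw', by simpa using iM _ _⟩
      · intro v hv
        simp only [Finset.mem_filter, Finset.mem_univ, true_and] at hv ⊢
        exact tM _ _ _ _ hw' hv
    apply Finset.sum_lt_sum
    · intro m _
      by_cases hm : m = m2
      · subst hm
        simp only [Function.update_self]
        exact hlt2.le
      · simp only [Function.update_of_ne hm, le_refl]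
    · refine ⟨m2, Finset.mem_univ _, ?_⟩
      simp only [Function.update_self]
      exact hlt2
  have hinj : Function.Injective f := by
    intro a b hab
    rcases cW (f b) a b with h | h | h
    · exact absurd h (key a b hab)
    · exact h
    · rw [← hab] at h
      exact absurd h (key b a hab.symm)
  let μM : Fin N ≃ Fin N := Equiv.ofBijective f (Finite.injective_iff_bijective.mp hinj)
  have hμf : ∀ m, μM m = f m := fun m => rfl
  obtain ⟨hf1, hf2⟩ := hf
  have hopt : ∀ μ : Fin N ≃ Fin N, MatchStable prefM prefW μ →
        ∀ m, μM m = μ m ∨ prefM m (μM m) (μ m) := hf2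
  refine ⟨μM, ⟨?_, hopt, ?_⟩, ?_⟩
  · rintro ⟨m, w, h1, h2⟩
    obtain ⟨m', h3, h4⟩ := hf1 m w h1
    have : μM.symm w = m' := by rw [Equiv.symm_apply_eq]; exact h3.symm
    rw [this] at h2
    exact iW _ _ (tW _ _ _ _ h2 h4)
  · intro μ hμ w
    rcases cW w (μ.symm w) (μM.symm w) with h | h | h
    · exact Or.inr h
    · exact Or.inl h
    · exfalso
      rcases hopt μ hμ (μM.symm w) with h' | h'
      · rw [Equiv.apply_symm_apply] at h'
        have h3 : μ.symm w = μM.symm w := by rw [Equiv.symm_apply_eq]; exact h'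
        rw [h3] at h
        exact iW _ _ h
      · rw [Equiv.apply_symm_apply] at h'
        exact hμ ⟨_, w, h', h⟩
  · rintro ν ⟨hν, hν2, -⟩
    have hst : MatchStable prefM prefW μM := by
      rintro ⟨m, w, h1, h2⟩
      obtain ⟨m', h3, h4⟩ := hf1 m w h1
      have : μM.symm w = m' := by rw [Equiv.symm_apply_eq]; exact h3.symm
      rw [this] at h2
      exact iW _ _ (tW _ _ _ _ h2 h4)
    ext1 m
    rcases hν2 μM hst m with h | h
    · exact h
    · rcases hopt ν hν m with h' | h'
      · exact h'.symm
      · exact absurd (tM _ _ _ _ h h') (iM _ _)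

theorem matchStable_swap {N : ℕ} {prefM prefW : Fin N → Fin N → Fin N → Prop}
    {μ : Fin N ≃ Fin N} (h : MatchStable prefM prefW μ) : MatchStable prefW prefM μ.symm := by
  rintro ⟨w, m, h1, h2⟩
  exact h ⟨m, w, h2, h1⟩

/-- For every complete preference profile there is a unique stable matching `μM` which is
men-optimal and women-pessimal, and a unique stable matching `μW` which is women-optimal
and men-pessimal. -/
theorem exists_unique_optimal_stable (N : ℕ) (hN : 1 ≤ N)
    (prefM prefW : Fin N → Fin N → Fin N → Prop)
    (hM : ∀ m, IsStrictTotalOrder (Fin N) (prefM m))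
    (hW : ∀ w, IsStrictTotalOrder (Fin N) (prefW w)) :
    (∃! μM : Fin N ≃ Fin N, MatchStable prefM prefW μM ∧
      (∀ μ : Fin N ≃ Fin N, MatchStable prefM prefW μ →
        ∀ m, μM m = μ m ∨ prefM m (μM m) (μ m)) ∧
      (∀ μ : Fin N ≃ Fin N, MatchStable prefM prefW μ →
        ∀ w, μ.symm w = μM.symm w ∨ prefW w (μ.symm w) (μM.symm w))) ∧
    (∃! μW : Fin N ≃ Fin N, MatchStable prefM prefW μW ∧
      (∀ μ : Fin N ≃ Fin N, MatchStable prefM prefW μ →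
        ∀ w, μW.symm w = μ.symm w ∨ prefW w (μW.symm w) (μ.symm w)) ∧
      (∀ μ : Fin N ≃ Fin N, MatchStable prefM prefW μ →
        ∀ m, μ m = μW m ∨ prefM m (μ m) (μW m))) := by
  refine ⟨exists_men_optimal N prefM prefW hM hW, ?_⟩
  obtain ⟨ν, ⟨h1, h2, h3⟩, h4⟩ := exists_men_optimal N prefW prefM hW hM
  refine ⟨ν.symm, ⟨matchStable_swap h1, fun μ hμ w => h2 μ.symm (matchStable_swap hμ) w,
    fun μ hμ m => h3 μ.symm (matchStable_swap hμ) m⟩, ?_⟩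
  rintro κ ⟨k1, k2, k3⟩
  have := h4 κ.symm ⟨matchStable_swap k1, fun μ hμ w => k2 μ.symm (matchStable_swap hμ) w,
    fun μ hμ m => k3 μ.symm (matchStable_swap hμ) m⟩
  rw [← this, Equiv.symm_symm]
end

section
/- Opposition of interests: fix a complete preference profile and two stable matchings μ₁ and μ₂. Then every man weakly prefers μ₁ to μ₂ (for all m, μ₁(m) = μ₂(m) or μ₁(m) ≻ₘ μ₂(m)) if and only if every woman weakly prefers μ₂ to μ₁ (for all w, μ₂⁻¹(w) = μ₁⁻¹(w) or μ₂⁻¹(w) ≻_w μ₁⁻¹(w)). -/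
/-- Opposition of interests: for two stable matchings `μ₁` and `μ₂`, every man weakly
prefers `μ₁` to `μ₂` if and only if every woman weakly prefers `μ₂` to `μ₁`. -/
theorem men_weakly_prefer_iff_women_weakly_prefer (N : ℕ) (hN : 1 ≤ N)
    (prefM prefW : Fin N → Fin N → Fin N → Prop)
    (hM : ∀ m, IsStrictTotalOrder (Fin N) (prefM m))
    (hW : ∀ w, IsStrictTotalOrder (Fin N) (prefW w))
    (μ₁ μ₂ : Fin N ≃ Fin N)
    (h₁ : MatchStable prefM prefW μ₁) (h₂ : MatchStable prefM prefW μ₂) :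
    (∀ m, μ₁ m = μ₂ m ∨ prefM m (μ₁ m) (μ₂ m)) ↔
      (∀ w, μ₂.symm w = μ₁.symm w ∨ prefW w (μ₂.symm w) (μ₁.symm w)) := by
  constructor
  · intro h w
    rcases h (μ₁.symm w) with h | h
    · left
      rw [Equiv.apply_symm_apply] at h
      rw [Equiv.symm_apply_eq]
      exact h
    · rw [Equiv.apply_symm_apply] at h
      have := hW w
      rcases trichotomous_of (prefW w) (μ₂.symm w) (μ₁.symm w) with h' | h' | h'
      · exact Or.inr h'
      · exact Or.inl h'
      · exact absurd ⟨_, _, h, h'⟩ h₂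
  · intro h m
    rcases h (μ₂ m) with h | h
    · left
      rw [Equiv.symm_apply_apply] at h
      exact (Equiv.eq_symm_apply _).1 h
    · rw [Equiv.symm_apply_apply] at h
      have := hM m
      rcases trichotomous_of (prefM m) (μ₁ m) (μ₂ m) with h' | h' | h'
      · exact Or.inr h'
      · exact Or.inl h'
      · exact absurd ⟨_, _, h', h⟩ h₁
end

section
/- Lattice join of stable matchings: fix a complete preference profile and two stable matchings μ₁ and μ₂. Define ν : M → W by letting ν(m) be whichever of μ₁(m), μ₂(m) man m prefers (ν(m) = μ₁(m) if μ₁(m) = μ₂(m) or μ₁(m) ≻ₘ μ₂(m), else ν(m) = μ₂(m)). Then ν is a bijection from M to W, and the matching ν is stable. -/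
attribute [local instance] Classical.propDecidable

/-- Lattice join of two stable matchings: giving each man whichever of his two partners he
prefers yields a bijection, and the resulting matching is stable. -/
theorem join_of_stable_is_stable (N : ℕ) (hN : 1 ≤ N)
    (prefM prefW : Fin N → Fin N → Fin N → Prop)
    (hM : ∀ m, IsStrictTotalOrder (Fin N) (prefM m))
    (hW : ∀ w, IsStrictTotalOrder (Fin N) (prefW w))
    (μ₁ μ₂ : Fin N ≃ Fin N)
    (h₁ : MatchStable prefM prefW μ₁) (h₂ : MatchStable prefM prefW μ₂)
    (ν : Fin N → Fin N)
    (hν : ∀ m, ν m = if μ₁ m = μ₂ m ∨ prefM m (μ₁ m) (μ₂ m) then μ₁ m else μ₂ m) :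
    Function.Bijective ν ∧
      ∀ e : Fin N ≃ Fin N, (∀ m, e m = ν m) → MatchStable prefM prefW e := by
  have tM : ∀ m a b c, prefM m a b → prefM m b c → prefM m a c := fun m a b c h h' =>
    (hM m).toIsStrictOrder.toIsTrans.trans a b c h h'
  have cM : ∀ m a b, prefM m a b ∨ a = b ∨ prefM m b a := fun m a b => by
    haveI := hM m
    exact trichotomous_of (prefM m) a b
  have cW : ∀ w a b, prefW w a b ∨ a = b ∨ prefW w b a := fun w a b => by
    haveI := hW w
    exact trichotomous_of (prefW w) a b
  have b₁ : ∀ m, ν m = μ₁ m ∨ prefM m (ν m) (μ₁ m) := by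
    intro m
    rw [hν m]
    split_ifs with h
    · exact Or.inl rfl
    · rcases cM m (μ₁ m) (μ₂ m) with h' | h' | h' <;> tauto
  have b₂ : ∀ m, ν m = μ₂ m ∨ prefM m (ν m) (μ₂ m) := by
    intro m
    rw [hν m]
    split_ifs with h
    · exact h
    · exact Or.inl rfl
  have c : ∀ m, ν m = μ₁ m ∨ ν m = μ₂ m := by
    intro m
    rw [hν m]
    split_ifs <;> simp
  have key : ∀ m m', ν m = μ₁ m → ν m' = μ₂ m' → ν m = ν m' → m = m' := by
    intro m m' e e' h
    rcases b₂ m with h2 | h2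
    · exact μ₂.injective (by rw [← h2, ← e', h])
    rcases b₁ m' with h1 | h1
    · exact μ₁.injective (by rw [← e, ← h1, h])
    have s1 : μ₁.symm (ν m) = m := by rw [e]; simp
    have s2 : μ₂.symm (ν m) = m' := by rw [h, e']; simp
    rcases cW (ν m) m m' with hw | hw | hw
    · exact absurd ⟨m, ν m, h2, by rw [s2]; exact hw⟩ h₂
    · exact hw
    · exact absurd ⟨m', ν m, by rw [h]; exact h1, by rw [s1]; exact hw⟩ h₁
  refine ⟨Finite.injective_iff_bijective.mp ?_, ?_⟩
  · intro m m' h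
    rcases c m with e | e <;> rcases c m' with e' | e'
    · exact μ₁.injective (by rw [← e, ← e', h])
    · exact key m m' e e' h
    · exact (key m' m e' e h.symm).symm
    · exact μ₂.injective (by rw [← e, ← e', h])
  · rintro e he ⟨m, w, hm, hw⟩
    rw [he] at hm
    have hw' : ν (e.symm w) = w := by rw [← he]; simp
    rcases c (e.symm w) with h | h
    · refine h₁ ⟨m, w, ?_, ?_⟩
      · rcases b₁ m with g | g
        · rwa [← g]
        · exact tM _ _ _ _ hm g
      · have : μ₁.symm w = e.symm w := by rw [Equiv.symm_apply_eq, ← h, hw']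
        rwa [this]
    · refine h₂ ⟨m, w, ?_, ?_⟩
      · rcases b₂ m with g | g
        · rwa [← g]
        · exact tM _ _ _ _ hm g
      · have : μ₂.symm w = e.symm w := by rw [Equiv.symm_apply_eq, ← h, hw']
        rwa [this]
end
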